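/- Let d ≥ 2, k ≥ 2, 1 ≤ t ≤ k−1, let ψ ∈ ℂ^d be a unit vector with projector P = |ψ⟩⟨ψ|, let Ω = P + λ(I − P) with λ ∈ [0,1), and let 0 ≤ ε ≤ (d−1)/d with q = dε/(d−1). For the globally white-noisy ensemble state η = (1−q)(|ψ⟩⟨ψ|)^{⊗k} + q·I/d^k, with S_k the cyclic-shift unitary and D_k = (I + S_k)/2, one has tr[(Ω^{⊗t} ⊗ P ⊗ I^{⊗(k−t−1)}) · D_k η D_k†] = (1−q) + (q/2)[(λ + (1−λ)/d)^t/d + 1/d^k]. -/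

import Mathlib

open Matrix Kronecker BigOperators

noncomputable section

/-- The cyclically previous index: `m - 1 (mod k)`. -/
def prevIdx {k : ℕ} (m : Fin k) : Fin k :=
  ⟨(m.val + (k - 1)) % k, Nat.mod_lt _ m.pos⟩

/-- The cyclic-shift unitary `S_k` on `(ℂ^d)^{⊗k}`, determined by
`S_k (v_1 ⊗ ⋯ ⊗ v_k) = v_k ⊗ v_1 ⊗ ⋯ ⊗ v_{k-1}`, written as a matrix in the
standard tensor-product basis indexed by functions `Fin k → Fin d`. -/
def cyc (d k : ℕ) : Matrix (Fin k → Fin d) (Fin k → Fin d) ℂ :=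
  fun g f => if g = fun m => f (prevIdx m) then 1 else 0

/-- The SWAP projection `D_k = (I + S_k)/2`. -/
def Dk (d k : ℕ) : Matrix (Fin k → Fin d) (Fin k → Fin d) ℂ :=
  (1 / 2 : ℂ) • (1 + cyc d k)

/-- The tensor product `A_1 ⊗ A_2 ⊗ ⋯ ⊗ A_k` of `d × d` matrices, acting
factor-wise on `(ℂ^d)^{⊗k}`. -/
def tensOp {d k : ℕ} (A : Fin k → Matrix (Fin d) (Fin d) ℂ) :
    Matrix (Fin k → Fin d) (Fin k → Fin d) ℂ :=
  fun g f => ∏ m, A m (g m) (f m)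

/-- The tensor product `v_1 ⊗ ⋯ ⊗ v_k` of vectors in `ℂ^d`. -/
def tensVec {d k : ℕ} (v : Fin k → (Fin d → ℂ)) : (Fin k → Fin d) → ℂ :=
  fun f => ∏ m, v m (f m)

/-- The partial trace over the last `k - 1` tensor factors, mapping matrices on
`(ℂ^d)^{⊗k}` to `d × d` matrices by tracing out factors `2` through `k`. -/
def ptraceFirst {d k : ℕ} (M : Matrix (Fin k → Fin d) (Fin k → Fin d) ℂ) :
    Matrix (Fin d) (Fin d) ℂ :=
  fun a b => ∑ r : {i : Fin k // i.val ≠ 0} → Fin d,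
    M (fun m => if h : m.val = 0 then a else r ⟨m, h⟩)
      (fun m => if h : m.val = 0 then b else r ⟨m, h⟩)

lemma tensOp_mul {d k : ℕ} (A B : Fin k → Matrix (Fin d) (Fin d) ℂ) :
    tensOp A * tensOp B = tensOp (fun m => A m * B m) := by
  ext g f
  simp only [tensOp, Matrix.mul_apply, ← Finset.prod_mul_distrib]
  exact (Fintype.prod_sum (fun m x => A m (g m) x * B m x (f m))).symm

lemma tensOp_trace {d k : ℕ} (A : Fin k → Matrix (Fin d) (Fin d) ℂ) :
    (tensOp A).trace = ∏ m, (A m).trace := by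
  simp only [tensOp, Matrix.trace, Matrix.diag]
  exact (Fintype.prod_sum (fun m x => A m x x)).symm

lemma tensOp_conj {d k : ℕ} (A : Fin k → Matrix (Fin d) (Fin d) ℂ) :
    (tensOp A)ᴴ = tensOp (fun m => (A m)ᴴ) := by
  ext g f
  simp [tensOp, Matrix.conjTranspose_apply]

lemma prevIdx_zero (n : ℕ) : prevIdx (0 : Fin (n+1)) = Fin.last n := by
  apply Fin.ext
  simp [prevIdx]

lemma prevIdx_succ {n : ℕ} (i : Fin n) : prevIdx i.succ = i.castSucc := by
  apply Fin.ext
  have : i.val + 1 + n = i.val + (n+1) := by ring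
  simp [prevIdx, this]

lemma prevIdx_bij (k : ℕ) : Function.Bijective (prevIdx (k := k)) := by
  rw [← Finite.surjective_iff_bijective]
  cases k with
  | zero => intro x; exact x.elim0
  | succ n =>
    intro x
    induction x using Fin.lastCases with
    | last => exact ⟨0, prevIdx_zero n⟩
    | cast i => exact ⟨i.succ, prevIdx_succ i⟩

lemma cyc_apply' (d k : ℕ) (g f : Fin k → Fin d) :
    cyc d k g f = if f = (fun m => g ((Equiv.ofBijective _ (prevIdx_bij k)).symm m)) then 1 else 0 := by
  unfold cyc
  congr 1
  apply propext
  constructor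
  · rintro rfl
    funext m
    exact congrArg f (Equiv.apply_symm_apply (Equiv.ofBijective _ (prevIdx_bij k)) m).symm
  · rintro rfl
    funext m
    exact congrArg g (Equiv.symm_apply_apply (Equiv.ofBijective _ (prevIdx_bij k)) m).symm

lemma cyc_conj_mul (d k : ℕ) : cyc d k * (cyc d k)ᴴ = 1 := by
  ext g f
  simp only [Matrix.mul_apply, Matrix.conjTranspose_apply, cyc_apply' d k g]
  simp only [cyc, Matrix.one_apply, ite_mul, one_mul, zero_mul, Finset.sum_ite_eq',
    Finset.sum_ite_eq, Finset.mem_univ, if_true]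
  have : (fun m => (fun m => g ((Equiv.ofBijective _ (prevIdx_bij k)).symm m)) (prevIdx m)) = g := by
    funext m
    exact congrArg g (Equiv.symm_apply_apply (Equiv.ofBijective _ (prevIdx_bij k)) m)
  rw [this]
  by_cases h : g = f
  · simp [h]
  · simp [h, Ne.symm h]

lemma cyc_mul_P {d k : ℕ} (v w : Fin d → ℂ) :
    cyc d k * tensOp (fun _ : Fin k => vecMulVec v w) = tensOp (fun _ : Fin k => vecMulVec v w) := by
  ext g f
  simp only [Matrix.mul_apply, cyc_apply' d k g, ite_mul, one_mul, zero_mul, Finset.sum_ite_eq',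
    Finset.sum_ite_eq, Finset.mem_univ, if_true]
  simp only [tensOp, vecMulVec_apply, Finset.prod_mul_distrib]
  congr 1
  exact Equiv.prod_comp (Equiv.ofBijective _ (prevIdx_bij k)).symm (fun m => v (g m))

def pathR {d : ℕ} (A : ℕ → Matrix (Fin d) (Fin d) ℂ) : ℕ → Matrix (Fin d) (Fin d) ℂ
  | 0 => 1
  | n+1 => A n * pathR A n

lemma path_sum {d : ℕ} (A : ℕ → Matrix (Fin d) (Fin d) ℂ) (n : ℕ) :
    ∀ B : Matrix (Fin d) (Fin d) ℂ,
    ∑ g : Fin (n+1) → Fin d, B (g 0) (g (Fin.last n)) *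
      ∏ i : Fin n, A i (g i.succ) (g i.castSucc) = (B * pathR A n).trace := by
  induction n with
  | zero =>
    intro B
    rw [← (Equiv.funUnique (Fin 1) (Fin d)).symm.sum_comp]
    simp [pathR, Matrix.trace]
  | succ n ih =>
    intro B
    have h := ih (B * A n)
    rw [pathR, ← Matrix.mul_assoc, ← h]
    rw [← (Fin.snocEquiv (fun _ : Fin (n+2) => Fin d)).sum_comp, Fintype.sum_prod_type,
      Finset.sum_comm]
    refine Finset.sum_congr rfl fun g _ => ?_
    rw [Matrix.mul_apply, Finset.sum_mul]
    refine Finset.sum_congr rfl fun x _ => ?_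
    rw [Fin.prod_univ_castSucc]
    have e0 : (0 : Fin (n+2)) = Fin.castSucc 0 := rfl
    simp only [Fin.snocEquiv, Equiv.coe_fn_mk, Fin.snoc_last, Fin.snoc_castSucc, e0,
      Fin.succ_castSucc, Fin.succ_last, Fin.val_castSucc, Fin.val_last]
    ring

lemma trace_cyc {d n : ℕ} (A : ℕ → Matrix (Fin d) (Fin d) ℂ) :
    (tensOp (fun m : Fin (n+1) => A m) * cyc d (n+1)).trace
      = (A 0 * pathR (fun i => A (i+1)) n).trace := by
  rw [← path_sum]
  simp only [Matrix.trace, Matrix.diag, Matrix.mul_apply]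
  refine Finset.sum_congr rfl fun g _ => ?_
  simp only [cyc, mul_ite, mul_one, mul_zero, Finset.sum_ite_eq', Finset.sum_ite_eq,
    Finset.mem_univ, if_true, tensOp]
  rw [Fin.prod_univ_succ]
  simp [prevIdx_zero, prevIdx_succ]

/-- with `P` inserted on factor `t+1`, for the globally white-noisy
ensemble state `η = (1−q)(|ψ⟩⟨ψ|)^{⊗k} + q·I/d^k` with `q = dε/(d−1)`,
`tr[(Ω^{⊗t} ⊗ P ⊗ I^{⊗(k−t−1)}) · D_k η D_k†]
  = (1−q) + (q/2)[(λ + (1−λ)/d)^t/d + 1/d^k]`. -/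
theorem stmt13 (d k t : ℕ) (hd : 2 ≤ d) (hk : 2 ≤ k) (ht1 : 1 ≤ t) (ht2 : t ≤ k - 1)
    (ψ : Fin d → ℂ) (hψ : star ψ ⬝ᵥ ψ = 1)
    (lam ε q : ℝ) (hlam0 : 0 ≤ lam) (hlam1 : lam < 1)
    (hε0 : 0 ≤ ε) (hε1 : ε ≤ ((d : ℝ) - 1) / (d : ℝ))
    (hq : q = (d : ℝ) * ε / ((d : ℝ) - 1))
    (P Ω : Matrix (Fin d) (Fin d) ℂ)
    (hP : P = vecMulVec ψ (star ψ))
    (hΩ : Ω = P + (lam : ℂ) • (1 - P))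
    (η : Matrix (Fin k → Fin d) (Fin k → Fin d) ℂ)
    (hη : η = ((1 - q : ℝ) : ℂ) • tensOp (fun _ : Fin k => P)
        + ((q : ℝ) : ℂ) • ((d : ℂ) ^ k)⁻¹ • (1 : Matrix (Fin k → Fin d) (Fin k → Fin d) ℂ)) :
    (tensOp (fun m : Fin k => if m.val < t then Ω else if m.val = t then P else 1)
        * (Dk d k * η * (Dk d k)ᴴ)).trace
      = ((1 - q + q / 2 * ((lam + (1 - lam) / (d : ℝ)) ^ t / (d : ℝ)
          + 1 / (d : ℝ) ^ k) : ℝ) : ℂ) := by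
  obtain ⟨n, rfl⟩ : ∃ n, k = n + 1 := ⟨k - 1, by omega⟩
  have htn : t ≤ n := by omega
  have hPP : P * P = P := by
    rw [hP, vecMulVec_mul_vecMulVec, hψ, one_smul]
  have hPH : Pᴴ = P := by
    rw [hP, conjTranspose_vecMulVec, star_star]
  have hPt : P.trace = 1 := by
    rw [hP, trace_vecMulVec, dotProduct_comm, hψ]
  have hΩP : Ω * P = P := by
    rw [hΩ, add_mul, smul_mul_assoc, sub_mul, one_mul, hPP]; simp
  have hPΩ : P * Ω = P := by
    rw [hΩ, mul_add, mul_smul_comm, mul_sub, mul_one, hPP]; simp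
  have hΩH : Ωᴴ = Ω := by
    rw [hΩ]
    simp [conjTranspose_smul, hPH]
  have hΩt : Ω.trace = 1 + lam * (d - 1) := by
    rw [hΩ]
    simp [hPt]
  set M : ℕ → Matrix (Fin d) (Fin d) ℂ := fun m => if m < t then Ω else if m = t then P else 1
    with hM
  set A := tensOp (fun m : Fin (n+1) => if m.val < t then Ω else if m.val = t then P else 1) with hA
  have hAM : A = tensOp (fun m : Fin (n+1) => M m) := rfl
  have hMP : ∀ m, M m * P = P := by
    intro m; simp only [hM]; split_ifs <;> simp [hΩP, hPP]
  have hMH : ∀ m, (M m)ᴴ = M m := by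
    intro m; simp only [hM]; split_ifs <;> simp [hΩH, hPH]
  have hAH : Aᴴ = A := by
    rw [hAM, tensOp_conj]; simp only [hMH]
  set Q := tensOp (fun _ : Fin (n+1) => P) with hQ
  have hAQ : A * Q = Q := by
    rw [hAM, hQ, tensOp_mul]; simp only [hMP]
  have hQt : Q.trace = 1 := by
    rw [hQ, tensOp_trace]; simp [hPt]
  have hQH : Qᴴ = Q := by
    rw [hQ, tensOp_conj]; simp only [hPH]
  have hSQ : cyc d (n+1) * Q = Q := by
    rw [hQ, hP]; exact cyc_mul_P _ _
  have hQS : Q * (cyc d (n+1))ᴴ = Q := by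
    have := congrArg conjTranspose hSQ
    rwa [conjTranspose_mul, hQH] at this
  have hR1 : ∀ m, m < t → P * pathR (fun i => M (i+1)) m = P := by
    intro m
    induction m with
    | zero => intro _; simp [pathR]
    | succ m ih =>
      intro h
      have : M (m+1) = Ω := by simp only [hM, if_pos h]
      rw [pathR, this, ← mul_assoc, hPΩ, ih (by omega)]
  have hR2 : ∀ m, t ≤ m → pathR (fun i => M (i+1)) m = P := by
    intro m
    induction m with
    | zero => intro h; omega
    | succ m ih =>
      intro h
      rcases h.eq_or_lt with h | h
      · have : M (m+1) = P := by simp [hM, h]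
        rw [pathR, this, hR1 m (by omega)]
      · have : M (m+1) = 1 := by
          simp only [hM]; rw [if_neg (by omega), if_neg (by omega)]
        rw [pathR, this, one_mul, ih (by omega)]
  have hAS : (A * cyc d (n+1)).trace = 1 := by
    rw [hAM, trace_cyc, hR2 n htn, hMP, hPt]
  have hAS' : (A * (cyc d (n+1))ᴴ).trace = 1 := by
    have := congrArg star hAS
    rwa [← trace_conjTranspose, conjTranspose_mul, hAH, trace_mul_comm, star_one] at this
  have hAt : A.trace = (1 + lam * (d - 1)) ^ t * (d : ℂ) ^ (n - t) := by
    rw [hAM, tensOp_trace, Fin.prod_univ_eq_prod_range (fun m => (M m).trace) (n+1)]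
    obtain ⟨r, rfl⟩ := Nat.exists_eq_add_of_le htn
    rw [show t + r + 1 = t + (1 + r) by ring, Finset.prod_range_add, Finset.prod_range_add]
    have h1 : ∏ x ∈ Finset.range t, (M x).trace = (1 + lam * (d - 1)) ^ t := by
      rw [Finset.prod_congr rfl (g := fun _ => Ω.trace)]
      · simp [hΩt]
      · intro x hx
        simp only [hM, if_pos (Finset.mem_range.1 hx)]
    have h2 : ∀ x, M (t + (1 + x)) = 1 := by
      intro x
      simp only [hM]; rw [if_neg (by omega), if_neg (by omega)]
    have h3 : M t = P := by simp [hM]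
    rw [h1]
    simp [h2, h3, hPt]
  have hDQ : Dk d (n+1) * Q = Q := by
    rw [Dk, smul_mul_assoc, add_mul, one_mul, hSQ, ← two_smul ℂ, smul_smul]; norm_num
  have hQD : Q * (Dk d (n+1))ᴴ = Q := by
    have := congrArg conjTranspose hDQ
    rwa [conjTranspose_mul, hQH] at this
  have hDD : Dk d (n+1) * (Dk d (n+1))ᴴ
      = (1/4 : ℂ) • ((2 : ℂ) • 1 + cyc d (n+1) + (cyc d (n+1))ᴴ) := by
    rw [Dk, conjTranspose_smul, conjTranspose_add, conjTranspose_one, smul_mul_smul_comm,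
      add_mul, mul_add, mul_add, cyc_conj_mul]
    have : (1/2 : ℂ) * star (1/2 : ℂ) = 1/4 := by simp; norm_num
    rw [this, two_smul]
    congr 1
    simp only [one_mul, mul_one]
    abel
  have key : A * (Dk d (n+1) * η * (Dk d (n+1))ᴴ) = ((1 - q : ℝ) : ℂ) • Q
      + ((q : ℝ) : ℂ) • ((d : ℂ) ^ (n+1))⁻¹ • (1/4 : ℂ) •
        ((2 : ℂ) • A + A * cyc d (n+1) + A * (cyc d (n+1))ᴴ) := by
    rw [hη]
    simp only [mul_add, add_mul, mul_smul_comm, smul_mul_assoc, mul_one, hDQ, hQD, hAQ, hDD]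
  rw [key]
  simp only [trace_add, trace_smul, hQt, hAS, hAS', hAt, smul_eq_mul]
  have hd0 : (d : ℂ) ≠ 0 := by
    have : d ≠ 0 := by omega
    exact_mod_cast this
  have e : (lam + (1 - lam) / (d : ℂ)) = (1 + lam * (d - 1)) / d := by
    field_simp; ring
  push_cast
  rw [e, div_pow]
  obtain ⟨r, rfl⟩ := Nat.exists_eq_add_of_le htn
  rw [Nat.add_sub_cancel_left, pow_add, pow_add]
  field_simp
  ring
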